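/- arXiv:1711.10170 — 2 statements merged into one kernel-verified Lean document; each statement's English description precedes it below -/
import Mathlib

section
/- Let σ : P × P → P be jointly monotone (A ≤ A′ and B ≤ B′ imply AσB ≤ A′σB′), positively homogeneous (σ(λA, λB) = λσ(A,B) for every λ > 0), and strictly monotone in its second variable (X ∈ P and A < B imply XσA < XσB). Then for all A, X, Y ∈ P with X ≠ Y one has d_T(XσA, YσA) < d_T(X, Y). -/
/-!
Put `r = d_T(X, Y)`. Then `r > 0`, `X ≤ e^r Y` and `Y ≤ e^r X` (`dT_bounds`). Since `A < e^r A`,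
monotonicity, strict monotonicity in the second variable and homogeneity give
`XσA ≤ (e^r Y)σA < (e^r Y)σ(e^r A) = e^r (YσA)`, and symmetrically `YσA < e^r (XσA)`. The two strict
order bounds put the spectrum of `(XσA)^{-1/2} (YσA) (XσA)^{-1/2}`, a compact set, inside the open
interval `(e^{-r}, e^r)`, so the norm of the logarithm is strictly less than `r` (`dT_lt`).
-/

open scoped ComplexOrder

variable {H : Type*} [NormedAddCommGroup H] [InnerProductSpace ℂ H] [CompleteSpace H]

/-- Membership in `P`, the cone of positive invertible bounded linear operators on `H`. -/
def PosInv (A : H →L[ℂ] H) : Prop := A.IsPositive ∧ IsUnit A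

/-- The Loewner order: `A ≤ B` iff `B - A` is positive. -/
def Loe (A B : H →L[ℂ] H) : Prop := (B - A).IsPositive

/-- The strict order `A < B`, meaning `B - A ∈ P`. -/
def LoeLT (A B : H →L[ℂ] H) : Prop := PosInv (B - A)

/-- `A^{1/2}` via the continuous functional calculus. -/
noncomputable def opSqrt (A : H →L[ℂ] H) : H →L[ℂ] H := cfc Real.sqrt A

/-- `A^{-1/2}` via the continuous functional calculus. -/
noncomputable def opInvSqrt (A : H →L[ℂ] H) : H →L[ℂ] H :=
  cfc (fun x : ℝ => (Real.sqrt x)⁻¹) A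

/-- The Thompson metric `d_T(A,B) = ‖log (A^{-1/2} B A^{-1/2})‖`. -/
noncomputable def dT (A B : H →L[ℂ] H) : ℝ :=
  ‖cfc Real.log (opInvSqrt A * B * opInvSqrt A)‖

/-- The mean induced by a function `f`: `A σ_f B = A^{1/2} f(A^{-1/2} B A^{-1/2}) A^{1/2}`. -/
noncomputable def indMean (f : ℝ → ℝ) (A B : H →L[ℂ] H) : H →L[ℂ] H :=
  opSqrt A * cfc f (opInvSqrt A * B * opInvSqrt A) * opSqrt A

/-- Convergence in the strong operator topology. -/
def SConv (A : ℕ → H →L[ℂ] H) (A0 : H →L[ℂ] H) : Prop :=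
  ∀ x : H, Filter.Tendsto (fun k => A k x) Filter.atTop (nhds (A0 x))

lemma PosInv.nonneg {A : H →L[ℂ] H} (hA : PosInv A) : 0 ≤ A :=
  (ContinuousLinearMap.nonneg_iff_isPositive A).2 hA.1

lemma PosInv.isSelfAdjoint {A : H →L[ℂ] H} (hA : PosInv A) : IsSelfAdjoint A :=
  IsSelfAdjoint.of_nonneg hA.nonneg

lemma PosInv.spectrum_pos {A : H →L[ℂ] H} (hA : PosInv A) {t : ℝ} (ht : t ∈ spectrum ℝ A) :
    0 < t := by
  refine lt_of_le_of_ne (spectrum_nonneg_of_nonneg hA.nonneg ht) ?_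
  rintro rfl
  exact spectrum.zero_notMem ℝ hA.2 ht

lemma PosInv.smul {A : H →L[ℂ] H} (hA : PosInv A) {c : ℝ} (hc : 0 < c) : PosInv (c • A) := by
  refine ⟨(ContinuousLinearMap.nonneg_iff_isPositive _).1 (smul_nonneg hc.le hA.nonneg), ?_⟩
  simpa using hA.2.smul (Units.mk0 c hc.ne')

lemma PosInv.conj {A S : H →L[ℂ] H} (hA : PosInv A) (hS : IsSelfAdjoint S) (hu : IsUnit S) :
    PosInv (S * A * S) :=
  ⟨(ContinuousLinearMap.nonneg_iff_isPositive _).1 (hS.conjugate_nonneg hA.nonneg),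
    (hu.mul hA.2).mul hu⟩

/-- A strictly positive operator plus a positive one is strictly positive. -/
lemma PosInv.add_nonneg {A B : H →L[ℂ] H} (hA : PosInv A) (hB : 0 ≤ B) : PosInv (A + B) :=
  ⟨(ContinuousLinearMap.nonneg_iff_isPositive _).1 (_root_.add_nonneg hA.nonneg hB),
    CStarAlgebra.isUnit_of_le A (le_add_of_nonneg_right hB)
      ((hA.2.isStrictlyPositive hA.nonneg))⟩

lemma continuousOn_invSqrt {A : H →L[ℂ] H} (hA : PosInv A) :
    ContinuousOn (fun x : ℝ => (Real.sqrt x)⁻¹) (spectrum ℝ A) :=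
  Real.continuous_sqrt.continuousOn.inv₀ fun _ ht => (Real.sqrt_pos.2 (hA.spectrum_pos ht)).ne'

lemma opSqrt_mul_self {A : H →L[ℂ] H} (hA : PosInv A) : opSqrt A * opSqrt A = A := by
  have := hA.isSelfAdjoint
  rw [opSqrt, ← cfc_mul Real.sqrt Real.sqrt A]
  conv_rhs => rw [← cfc_id ℝ A]
  exact cfc_congr fun t ht => Real.mul_self_sqrt (hA.spectrum_pos ht).le

lemma opSqrt_mul_opInvSqrt {A : H →L[ℂ] H} (hA : PosInv A) : opSqrt A * opInvSqrt A = 1 := by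
  have := hA.isSelfAdjoint
  rw [opSqrt, opInvSqrt, ← cfc_mul Real.sqrt _ A (by fun_prop) (continuousOn_invSqrt hA),
    ← cfc_one ℝ A]
  exact cfc_congr fun t ht => mul_inv_cancel₀ (Real.sqrt_pos.2 (hA.spectrum_pos ht)).ne'

lemma opInvSqrt_mul_opSqrt {A : H →L[ℂ] H} (hA : PosInv A) : opInvSqrt A * opSqrt A = 1 := by
  rw [← opSqrt_mul_opInvSqrt hA]
  exact cfc_commute_cfc _ _ A

lemma isSelfAdjoint_opInvSqrt (A : H →L[ℂ] H) : IsSelfAdjoint (opInvSqrt A) := cfc_predicate _ A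

lemma isSelfAdjoint_opSqrt (A : H →L[ℂ] H) : IsSelfAdjoint (opSqrt A) := cfc_predicate _ A

lemma isUnit_opInvSqrt {A : H →L[ℂ] H} (hA : PosInv A) : IsUnit (opInvSqrt A) :=
  ⟨⟨_, _, opInvSqrt_mul_opSqrt hA, opSqrt_mul_opInvSqrt hA⟩, rfl⟩

lemma opInvSqrt_conj_self {A : H →L[ℂ] H} (hA : PosInv A) :
    opInvSqrt A * A * opInvSqrt A = 1 := by
  nth_rewrite 2 [← opSqrt_mul_self hA]
  rw [← mul_assoc, opInvSqrt_mul_opSqrt hA, one_mul, opSqrt_mul_opInvSqrt hA]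

lemma opSqrt_conj_opInvSqrt {A : H →L[ℂ] H} (hA : PosInv A) (B : H →L[ℂ] H) :
    opSqrt A * (opInvSqrt A * B * opInvSqrt A) * opSqrt A = B := by
  calc _ = (opSqrt A * opInvSqrt A) * B * (opInvSqrt A * opSqrt A) := by simp only [mul_assoc]
    _ = B := by rw [opSqrt_mul_opInvSqrt hA, opInvSqrt_mul_opSqrt hA, one_mul, mul_one]

lemma PosInv.continuousOn_log {A : H →L[ℂ] H} (hA : PosInv A) :
    ContinuousOn Real.log (spectrum ℝ A) :=
  Real.continuousOn_log.mono fun _ ht => (hA.spectrum_pos ht).ne'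

lemma dT_bounds {X Y : H →L[ℂ] H} (hX : PosInv X) (hY : PosInv Y) :
    Y ≤ Real.exp (dT X Y) • X ∧ X ≤ Real.exp (dT X Y) • Y := by
  set r := dT X Y with hr
  set T := opInvSqrt X * Y * opInvSqrt X with hT
  have hTp : PosInv T := hY.conj (isSelfAdjoint_opInvSqrt X) (isUnit_opInvSqrt hX)
  have hlog : ∀ t ∈ spectrum ℝ T, |Real.log t| ≤ r := fun t ht =>
    norm_apply_le_norm_cfc Real.log T ht hTp.continuousOn_log hTp.isSelfAdjoint
  have hconj (c : ℝ) : opSqrt X * algebraMap ℝ (H →L[ℂ] H) c * opSqrt X = c • X := by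
    rw [Algebra.algebraMap_eq_smul_one, mul_smul_comm, mul_one, smul_mul_assoc,
      opSqrt_mul_self hX]
  have h1 : T ≤ algebraMap ℝ _ (Real.exp r) :=
    le_algebraMap_of_spectrum_le (fun t ht =>
      (Real.log_le_iff_le_exp (hTp.spectrum_pos ht)).1 (abs_le.1 (hlog t ht)).2)
      hTp.isSelfAdjoint
  have h2 : algebraMap ℝ _ (Real.exp (-r)) ≤ T :=
    algebraMap_le_of_le_spectrum (fun t ht =>
      (Real.le_log_iff_exp_le (hTp.spectrum_pos ht)).1 (abs_le.1 (hlog t ht)).1)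
      hTp.isSelfAdjoint
  have h1' := (isSelfAdjoint_opSqrt X).conjugate_le_conjugate h1
  have h2' := (isSelfAdjoint_opSqrt X).conjugate_le_conjugate h2
  rw [hconj, opSqrt_conj_opInvSqrt hX] at h1' h2'
  refine ⟨h1', ?_⟩
  have := smul_le_smul_of_nonneg_left h2' (Real.exp_pos r).le
  rwa [smul_smul, ← Real.exp_add, add_neg_cancel, Real.exp_zero, one_smul] at this

lemma dT_pos {X Y : H →L[ℂ] H} (hX : PosInv X) (hY : PosInv Y) (hXY : X ≠ Y) : 0 < dT X Y := by
  refine lt_of_le_of_ne (norm_nonneg _) fun h => hXY ?_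
  have hb := dT_bounds hX hY
  rw [← h, Real.exp_zero, one_smul, one_smul] at hb
  exact le_antisymm hb.2 hb.1

lemma dT_lt {U V : H →L[ℂ] H} (hU : PosInv U) (hV : PosInv V) {r : ℝ} (hr : 0 < r)
    (h1 : PosInv (Real.exp r • V - U)) (h2 : PosInv (Real.exp r • U - V)) : dT U V < r := by
  have hS := isSelfAdjoint_opInvSqrt U
  have hSu := isUnit_opInvSqrt hU
  have hTp : PosInv (opInvSqrt U * V * opInvSqrt U) := hV.conj hS hSu
  have h1' := (h1.smul (Real.exp_pos (-r))).conj hS hSu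
  have h2' := h2.conj hS hSu
  rw [smul_sub, smul_smul, ← Real.exp_add, neg_add_cancel, Real.exp_zero, one_smul, mul_sub,
    sub_mul, mul_smul_comm, smul_mul_assoc, opInvSqrt_conj_self hU,
    ← Algebra.algebraMap_eq_smul_one] at h1'
  rw [mul_sub, sub_mul, mul_smul_comm, smul_mul_assoc, opInvSqrt_conj_self hU,
    ← Algebra.algebraMap_eq_smul_one] at h2'
  refine norm_cfc_lt hr fun t ht => ?_
  have ht0 := hTp.spectrum_pos ht
  have a1 := h1'.spectrum_pos (t := t - Real.exp (-r))
    (by rw [← spectrum.sub_singleton_eq]; exact Set.sub_mem_sub ht rfl)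
  have a2 := h2'.spectrum_pos (t := Real.exp r - t)
    (by rw [← spectrum.singleton_sub_eq]; exact Set.sub_mem_sub rfl ht)
  rw [Real.norm_eq_abs, abs_lt]
  exact ⟨(Real.lt_log_iff_exp_lt ht0).2 (by linarith), (Real.log_lt_iff_lt_exp ht0).2 (by linarith)⟩

/-- If `σ : P × P → P` is jointly monotone, positively homogeneous and strictly
monotone in its second variable, then `d_T(XσA, YσA) < d_T(X,Y)` whenever `X ≠ Y`. -/
theorem thompson_strict_contraction
    (σ : (H →L[ℂ] H) → (H →L[ℂ] H) → (H →L[ℂ] H))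
    (hmaps : ∀ A B, PosInv A → PosInv B → PosInv (σ A B))
    (hmono : ∀ A A' B B', PosInv A → PosInv A' → PosInv B → PosInv B' →
      Loe A A' → Loe B B' → Loe (σ A B) (σ A' B'))
    (hhomog : ∀ A B, PosInv A → PosInv B → ∀ l : ℝ, 0 < l → σ (l • A) (l • B) = l • σ A B)
    (hstrict : ∀ X A B, PosInv X → PosInv A → PosInv B → LoeLT A B → LoeLT (σ X A) (σ X B))
    (A X Y : H →L[ℂ] H) (hA : PosInv A) (hX : PosInv X) (hY : PosInv Y) (hXY : X ≠ Y) :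
    dT (σ X A) (σ Y A) < dT X Y := by
  have hr := dT_pos hX hY hXY
  obtain ⟨hYX, hXY'⟩ := dT_bounds hX hY
  set r := dT X Y
  have he := Real.exp_pos r
  have hAlt : LoeLT A (Real.exp r • A) := by
    have := hA.smul (sub_pos.2 (Real.one_lt_exp_iff.2 hr))
    rwa [sub_smul, one_smul] at this
  -- `ZσA ≤ (e^r W)σA < (e^r W)σ(e^r A) = e^r (WσA)`
  have key : ∀ Z W, PosInv Z → PosInv W → Z ≤ Real.exp r • W →
      PosInv (Real.exp r • σ W A - σ Z A) := by
    intro Z W hZ hW hZW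
    have hm : Loe (σ Z A) (σ (Real.exp r • W) A) :=
      hmono _ _ _ _ hZ (hW.smul he) hA hA ((ContinuousLinearMap.le_def _ _).1 hZW)
        ((ContinuousLinearMap.le_def _ _).1 le_rfl)
    have hs : PosInv (σ (Real.exp r • W) (Real.exp r • A) - σ (Real.exp r • W) A) :=
      hstrict _ _ _ (hW.smul he) hA (hA.smul he) hAlt
    have := hs.add_nonneg ((ContinuousLinearMap.nonneg_iff_isPositive _).2 hm)
    rwa [hhomog W A hW hA _ he, sub_add_sub_cancel] at this
  exact dT_lt (hmaps _ _ hX hA) (hmaps _ _ hY hA) hr (key X Y hX hY hXY') (key Y X hY hX hYX)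
end

section
/- Let τ and σ be operator means on P. Then for every A, B ∈ P there exists X ∈ P such that X = (XσA) τ (XσB). -/
/-!
The map `F X = (X σ A) τ (X σ B)` is monotone on `P`. If `a • 1 ≤ A, B ≤ b • 1` with
`0 < a ≤ b`, then homogeneity and normalization give `a • 1 ≤ F (a • 1)` and `F (b • 1) ≤ b • 1`.
The iterates `F^[k] (b • 1)` are therefore nonincreasing and bounded below by `a • 1`, so they
converge strongly to some `X ≥ a • 1` (`exists_sconv_of_antitone`), and `X ∈ P`. Downward
continuity of `σ` and then of `τ` shows that `F (F^[k] (b • 1))` converges strongly to `F X`;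
since this is the same sequence shifted by one, `F X = X`.
-/

open scoped ComplexOrder

variable {H : Type*} [NormedAddCommGroup H] [InnerProductSpace ℂ H] [CompleteSpace H]

/-- A Kubo–Ando operator mean on `P`: a binary operation satisfying (I) joint
monotonicity, (II) the transformer equality (together with positive homogeneity),
(III) downward continuity along nonincreasing strongly convergent sequences, and
(IV) normalization. -/
structure IsOperatorMean (m : (H →L[ℂ] H) → (H →L[ℂ] H) → (H →L[ℂ] H)) : Prop where
  maps_P : ∀ A B, PosInv A → PosInv B → PosInv (m A B)
  mono : ∀ A A' B B', PosInv A → PosInv A' → PosInv B → PosInv B' →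
    Loe A A' → Loe B B' → Loe (m A B) (m A' B')
  transformer : ∀ A B C, PosInv A → PosInv B → PosInv C →
    C * m A B * C = m (C * A * C) (C * B * C)
  homog : ∀ A B, PosInv A → PosInv B → ∀ r : ℝ, 0 < r → m (r • A) (r • B) = r • m A B
  downCont : ∀ (A B : ℕ → H →L[ℂ] H) (A0 B0 : H →L[ℂ] H),
    (∀ k, PosInv (A k)) → (∀ k, PosInv (B k)) → PosInv A0 → PosInv B0 →
    (∀ k, Loe (A (k + 1)) (A k)) → (∀ k, Loe (B (k + 1)) (B k)) →
    SConv A A0 → SConv B B0 →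
    (∀ k, Loe (m (A (k + 1)) (B (k + 1))) (m (A k) (B k))) ∧
      SConv (fun k => m (A k) (B k)) (m A0 B0)
  norm_one : m 1 1 = 1

/-- `σ` is strictly monotone in its second variable: `X ∈ P` and `A < B` imply `XσA < XσB`. -/
def StrictSecond (m : (H →L[ℂ] H) → (H →L[ℂ] H) → (H →L[ℂ] H)) : Prop :=
  ∀ X A B, PosInv X → PosInv A → PosInv B → LoeLT A B → LoeLT (m X A) (m X B)

set_option linter.unusedSectionVars false

theorem posInv_iff_isStrictlyPositive {A : H →L[ℂ] H} : PosInv A ↔ IsStrictlyPositive A := by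
  rw [IsStrictlyPositive.iff_of_unital, ContinuousLinearMap.nonneg_iff_isPositive]; rfl

theorem loe_iff_le {A B : H →L[ℂ] H} : Loe A B ↔ A ≤ B := Iff.rfl

theorem posInv_smul_one {r : ℝ} (hr : 0 < r) : PosInv (r • (1 : H →L[ℂ] H)) := by
  rw [posInv_iff_isStrictlyPositive]
  exact IsStrictlyPositive.smul hr isStrictlyPositive_one

theorem PosInv.of_le {A B : H →L[ℂ] H} (hA : PosInv A) (h : A ≤ B) : PosInv B := by
  rw [posInv_iff_isStrictlyPositive] at *
  exact hA.of_le h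

theorem PosInv.exists_smul_one_le {A : H →L[ℂ] H} (hA : PosInv A) :
    ∃ r : ℝ, 0 < r ∧ r • (1 : H →L[ℂ] H) ≤ A := by
  have hA' := posInv_iff_isStrictlyPositive.1 hA
  rcases subsingleton_or_nontrivial (H →L[ℂ] H) with hsub | hnon
  · exact ⟨1, one_pos, (Subsingleton.elim _ _).le⟩
  obtain ⟨r, hr, h⟩ := (CFC.exists_pos_algebraMap_le_iff (A := H →L[ℂ] H) (a := A)
    hA'.isSelfAdjoint).2 fun x hx => hA'.spectrum_pos hx
  exact ⟨r, hr, by rwa [Algebra.algebraMap_eq_smul_one] at h⟩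

theorem PosInv.le_norm_smul_one {A : H →L[ℂ] H} (hA : PosInv A) :
    A ≤ ‖A‖ • (1 : H →L[ℂ] H) := by
  rw [← Algebra.algebraMap_eq_smul_one]
  exact hA.1.isSelfAdjoint.le_algebraMap_norm_self

theorem smul_one_le_smul_one {r s : ℝ} (h : r ≤ s) :
    r • (1 : H →L[ℂ] H) ≤ s • (1 : H →L[ℂ] H) :=
  smul_le_smul_of_nonneg_right h zero_le_one

/-- A Cauchy–Schwarz type bound: it turns convergence of the quadratic forms of a monotone
sequence into strong convergence. -/
theorem norm_apply_sq_le {T : H →L[ℂ] H} (hT : 0 ≤ T) (x : H) :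
    ‖T x‖ ^ 2 ≤ ‖T‖ * (inner ℂ (T x) x).re := by
  set S := CFC.sqrt T with hS
  have hSS : S * S = T := CFC.sqrt_mul_sqrt_self T
  have hS0 : 0 ≤ S := CFC.sqrt_nonneg T
  have hsa : IsSelfAdjoint S := .of_nonneg hS0
  have hsym := ((ContinuousLinearMap.nonneg_iff_isPositive S).1 hS0).inner_left_eq_inner_right
  have h1 : ‖T‖ = ‖S‖ ^ 2 := by
    rw [← hSS, ← hsa.norm_mul_self]
  have h2 : (inner ℂ (T x) x).re = ‖S x‖ ^ 2 := by
    rw [← hSS, mul_apply_eq_comp, hsym]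
    exact inner_self_eq_norm_sq (𝕜 := ℂ) (S x)
  rw [h1, h2, ← mul_pow]
  gcongr
  rw [← hSS]
  exact S.le_opNorm (S x)

theorem SConv.nonneg {X : ℕ → H →L[ℂ] H} {Y : H →L[ℂ] H} (h : SConv X Y)
    (hX : ∀ k, 0 ≤ X k) : 0 ≤ Y := by
  rw [ContinuousLinearMap.nonneg_iff_isPositive, ContinuousLinearMap.isPositive_iff_complex]
  intro x
  have h0 : (0 : ℂ) ≤ inner ℂ (Y x) x :=
    ge_of_tendsto' ((h x).inner tendsto_const_nhds) fun k =>
      ((ContinuousLinearMap.nonneg_iff_isPositive _).1 (hX k)).inner_nonneg_left x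
  rw [Complex.le_def] at h0
  exact ⟨Complex.ext rfl h0.2, h0.1⟩

theorem SConv.ge {X : ℕ → H →L[ℂ] H} {Y C : H →L[ℂ] H} (h : SConv X Y)
    (hX : ∀ k, C ≤ X k) : C ≤ Y := by
  rw [← sub_nonneg]
  refine SConv.nonneg (X := fun k => X k - C) (fun x => ?_) fun k => sub_nonneg.2 (hX k)
  simpa using (h x).sub_const (C x)

/-- A nonincreasing sequence of positive operators converges strongly. -/
theorem exists_sconv_of_antitone {X : ℕ → H →L[ℂ] H} (hX : Antitone X) (h0 : ∀ k, 0 ≤ X k) :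
    ∃ Y, SConv X Y := by
  have hcauchy : ∀ x, CauchySeq fun k => X k x := by
    intro x
    set q : ℕ → ℝ := fun k => (inner ℂ (X k x) x).re with hq
    have hq_sub : ∀ n m, q n - q m = (inner ℂ ((X n - X m) x) x).re := by
      intro n m; simp [hq]
    have hq_anti : Antitone q := by
      intro n m hnm
      rw [← sub_nonneg, hq_sub]
      exact ((ContinuousLinearMap.nonneg_iff_isPositive _).1
        (sub_nonneg.2 (hX hnm))).re_inner_nonneg_left x
    have hq_bdd : BddBelow (Set.range q) := by
      refine ⟨0, ?_⟩
      rintro _ ⟨k, rfl⟩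
      exact ((ContinuousLinearMap.nonneg_iff_isPositive _).1 (h0 k)).re_inner_nonneg_left x
    have hlim := tendsto_atTop_ciInf hq_anti hq_bdd
    refine cauchySeq_of_le_tendsto_0' (fun n => √(‖X 0‖ * (q n - ⨅ k, q k))) (fun n m hnm => ?_) ?_
    · rw [dist_eq_norm]
      apply Real.le_sqrt_of_sq_le
      have hpos : 0 ≤ X n - X m := sub_nonneg.2 (hX hnm)
      have hnorm : ‖X n - X m‖ ≤ ‖X 0‖ :=
        CStarAlgebra.norm_le_norm_of_nonneg_of_le hpos
          ((sub_le_self _ (h0 m)).trans (hX (Nat.zero_le n)))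
      have hinf : (⨅ k, q k) ≤ q m := ciInf_le hq_bdd m
      calc ‖X n x - X m x‖ ^ 2 = ‖(X n - X m) x‖ ^ 2 := by simp
        _ ≤ ‖X n - X m‖ * (q n - q m) := by rw [hq_sub]; exact norm_apply_sq_le hpos x
        _ ≤ ‖X 0‖ * (q n - ⨅ k, q k) :=
          mul_le_mul hnorm (by linarith) (sub_nonneg.2 (hq_anti hnm)) (norm_nonneg _)
    · simpa using ((hlim.sub_const (⨅ k, q k)).const_mul ‖X 0‖).sqrt
  choose f hf using fun x => cauchySeq_tendsto_of_complete (hcauchy x)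
  exact ⟨continuousLinearMapOfTendsto X (tendsto_pi_nhds.2 hf), hf⟩

theorem IsOperatorMean.smul_one {m : (H →L[ℂ] H) → (H →L[ℂ] H) → (H →L[ℂ] H)}
    (hm : IsOperatorMean m) {r : ℝ} (hr : 0 < r) :
    m (r • (1 : H →L[ℂ] H)) (r • (1 : H →L[ℂ] H)) = r • (1 : H →L[ℂ] H) := by
  have h1 : PosInv (1 : H →L[ℂ] H) := by simpa using posInv_smul_one (H := H) one_pos
  rw [hm.homog 1 1 h1 h1 r hr, hm.norm_one]

/-- For operator means `τ` and `σ` and every `A, B ∈ P`, the fixed point equation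
`X = (XσA) τ (XσB)` has a solution `X ∈ P`. -/
theorem fixed_point_exists
    (τ σ : (H →L[ℂ] H) → (H →L[ℂ] H) → (H →L[ℂ] H))
    (hτ : IsOperatorMean τ) (hσ : IsOperatorMean σ)
    (A B : H →L[ℂ] H) (hA : PosInv A) (hB : PosInv B) :
    ∃ X : H →L[ℂ] H, PosInv X ∧ X = τ (σ X A) (σ X B) := by
  obtain ⟨a₁, ha₁, hA₁⟩ := hA.exists_smul_one_le
  obtain ⟨a₂, ha₂, hB₂⟩ := hB.exists_smul_one_le
  obtain ⟨a, ha, hAa, hBa⟩ : ∃ a : ℝ, 0 < a ∧ a • (1 : H →L[ℂ] H) ≤ A ∧ a • 1 ≤ B :=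
    ⟨min a₁ a₂, lt_min ha₁ ha₂, (smul_one_le_smul_one (min_le_left _ _)).trans hA₁,
      (smul_one_le_smul_one (min_le_right _ _)).trans hB₂⟩
  -- `a` is included in the maximum so that `a ≤ b` holds also on the zero space.
  obtain ⟨b, hab, hAb, hBb⟩ : ∃ b : ℝ, a ≤ b ∧ A ≤ b • (1 : H →L[ℂ] H) ∧ B ≤ b • 1 :=
    ⟨max a (max ‖A‖ ‖B‖), le_max_left _ _,
      hA.le_norm_smul_one.trans (smul_one_le_smul_one (by simp)),
      hB.le_norm_smul_one.trans (smul_one_le_smul_one (by simp))⟩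
  have hb : 0 < b := ha.trans_le hab
  have hPa := posInv_smul_one (H := H) ha
  have hPb := posInv_smul_one (H := H) hb
  set F : (H →L[ℂ] H) → (H →L[ℂ] H) := fun X => τ (σ X A) (σ X B) with hF
  have hFmono : ∀ X Y, PosInv X → PosInv Y → X ≤ Y → F X ≤ F Y := fun X Y hX hY hXY =>
    hτ.mono _ _ _ _ (hσ.maps_P _ _ hX hA) (hσ.maps_P _ _ hY hA) (hσ.maps_P _ _ hX hB)
      (hσ.maps_P _ _ hY hB)
      (hσ.mono _ _ _ _ hX hY hA hA hXY (loe_iff_le.2 le_rfl))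
      (hσ.mono _ _ _ _ hX hY hB hB hXY (loe_iff_le.2 le_rfl))
  have hFa : a • (1 : H →L[ℂ] H) ≤ F (a • 1) := by
    have h := hτ.mono _ _ _ _ hPa (hσ.maps_P _ _ hPa hA) hPa (hσ.maps_P _ _ hPa hB)
      (by simpa only [hσ.smul_one ha] using
        hσ.mono _ _ _ _ hPa hPa hPa hA (loe_iff_le.2 le_rfl) hAa)
      (by simpa only [hσ.smul_one ha] using
        hσ.mono _ _ _ _ hPa hPa hPa hB (loe_iff_le.2 le_rfl) hBa)
    rwa [hτ.smul_one ha] at h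
  have hFb : F (b • 1) ≤ b • (1 : H →L[ℂ] H) := by
    have h := hτ.mono _ _ _ _ (hσ.maps_P _ _ hPb hA) hPb (hσ.maps_P _ _ hPb hB) hPb
      (by simpa only [hσ.smul_one hb] using
        hσ.mono _ _ _ _ hPb hPb hA hPb (loe_iff_le.2 le_rfl) hAb)
      (by simpa only [hσ.smul_one hb] using
        hσ.mono _ _ _ _ hPb hPb hB hPb (loe_iff_le.2 le_rfl) hBb)
    rwa [hτ.smul_one hb] at h
  set X : ℕ → H →L[ℂ] H := fun k => F^[k] (b • 1) with hXdef
  have hXs : ∀ k, X (k + 1) = F (X k) := fun k => Function.iterate_succ_apply' F k _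
  have hXa : ∀ k, a • (1 : H →L[ℂ] H) ≤ X k := by
    intro k
    induction k with
    | zero => exact smul_one_le_smul_one hab
    | succ k ih =>
      rw [hXs]
      exact hFa.trans (hFmono _ _ hPa (hPa.of_le ih) ih)
  have hXP : ∀ k, PosInv (X k) := fun k => hPa.of_le (hXa k)
  have hXstep : ∀ k, X (k + 1) ≤ X k := by
    intro k
    induction k with
    | zero => exact hFb
    | succ k ih =>
      rw [hXs (k + 1)]
      exact (hFmono _ _ (hXP _) (hXP _) ih).trans_eq (hXs k).symm
  obtain ⟨Y, hY⟩ := exists_sconv_of_antitone (antitone_nat_of_succ_le hXstep)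
    fun k => (ContinuousLinearMap.nonneg_iff_isPositive _).2 (hXP k).1
  have hYP : PosInv Y := hPa.of_le (hY.ge hXa)
  have hconv : ∀ C, PosInv C → (∀ k, Loe (σ (X (k + 1)) C) (σ (X k) C)) ∧
      SConv (fun k => σ (X k) C) (σ Y C) := fun C hC =>
    hσ.downCont X (fun _ => C) Y C hXP (fun _ => hC) hYP hC hXstep
      (fun _ => loe_iff_le.2 le_rfl) hY fun _ => tendsto_const_nhds
  have hFY : SConv (fun k => F (X k)) (F Y) :=
    (hτ.downCont _ _ _ _ (fun k => hσ.maps_P _ _ (hXP k) hA) (fun k => hσ.maps_P _ _ (hXP k) hB)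
      (hσ.maps_P _ _ hYP hA) (hσ.maps_P _ _ hYP hB) (hconv A hA).1 (hconv B hB).1
      (hconv A hA).2 (hconv B hB).2).2
  refine ⟨Y, hYP, ContinuousLinearMap.ext fun x => ?_⟩
  refine tendsto_nhds_unique ((Filter.tendsto_add_atTop_iff_nat 1).2 (hY x)) ?_
  simpa only [hXs] using hFY x
end
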